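/- Let n ≥ 1, let ρ < 1 be common to all agents, and let α_{pk} ≥ 0 be coefficients such that every row p has at least one strictly positive entry. Let π be a strictly positive price vector satisfying the market-clearing conditions ∑_{p=1}^n x_{pj}(π) = 1 for every good j. Suppose goods i and j satisfy α_{pi} ≤ α_{pj} for every agent p and α_{hi} < α_{hj} for at least one agent h. Then π_i < π_j. Hence the CES ranking is strictly monotone when all agents' utility functions have the same elasticity of substitution. -/

import Mathlib

/-!
If `π j ≤ π i`, then every agent demands at least as much of good `j` as of good `i`: the common
exponent `s = 1 / (1 - ρ)` is positive, so `α p i ^ s / π i ^ s ≤ α p j ^ s / π j ^ s`, and the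
remaining factor of the demand depends only on the agent. The inequality is strict for an agent
with `α h i < α h j`, so total demand for `i` is strictly below that for `j`, although market
clearing makes both equal to `1`.
-/

/-- The CES demand of agent `p` for good `j` at prices `π`, with common parameter `ρ`
for all agents, when agent `p` is endowed with one unit of good `p` (budget `π p`). -/
noncomputable def cesDemand (n : ℕ) (α : Fin n → Fin n → ℝ) (ρ : ℝ)
    (π : Fin n → ℝ) (p j : Fin n) : ℝ :=
  ((α p j) ^ (1 / (1 - ρ)) / (π j) ^ (1 / (1 - ρ))) * π p /
    (∑ k, (α p k) ^ (1 / (1 - ρ)) * (π k) ^ (-ρ / (1 - ρ)))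

/-- when all agents' utilities share the same elasticity of substitution
(common `ρ < 1`), the CES ranking is strictly monotone: if at a strictly positive
market-clearing price vector the coefficients toward good `i` are dominated by those
toward good `j` (with at least one strict inequality), then `π i < π j`. -/
theorem cesRanking_strictly_monotone
    (n : ℕ) (hn : 1 ≤ n) (ρ : ℝ) (hρ : ρ < 1)
    (α : Fin n → Fin n → ℝ) (hα : ∀ p k, 0 ≤ α p k) (hαpos : ∀ p, ∃ k, 0 < α p k)
    (π : Fin n → ℝ) (hπ : ∀ p, 0 < π p)
    (hclear : ∀ j, ∑ p, cesDemand n α ρ π p j = 1)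
    (i j : Fin n) (hle : ∀ p, α p i ≤ α p j) (hlt : ∃ h, α h i < α h j) :
    π i < π j := by
  set s := 1 / (1 - ρ) with hs
  have hs0 : 0 < s := by
    rw [hs]
    exact one_div_pos.mpr (sub_pos.mpr hρ)
  have hD : ∀ p, 0 < ∑ k, (α p k) ^ s * (π k) ^ (-ρ / (1 - ρ)) := by
    intro p
    obtain ⟨k, hk⟩ := hαpos p
    refine Finset.sum_pos' (fun l _ => ?_) ⟨k, Finset.mem_univ k, ?_⟩
    · exact mul_nonneg (Real.rpow_nonneg (hα p l) _) (Real.rpow_nonneg (hπ l).le _)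
    · exact mul_pos (Real.rpow_pos_of_pos hk _) (Real.rpow_pos_of_pos (hπ k) _)
  by_contra hcon
  have hji : π j ≤ π i := not_lt.mp hcon
  have hpow : (π j) ^ s ≤ (π i) ^ s := Real.rpow_le_rpow (hπ j).le hji hs0.le
  have hjpos : 0 < (π j) ^ s := Real.rpow_pos_of_pos (hπ j) _
  have hdem_le : ∀ p, cesDemand n α ρ π p i ≤ cesDemand n α ρ π p j := by
    intro p
    unfold cesDemand
    refine div_le_div_of_nonneg_right (mul_le_mul_of_nonneg_right ?_ (hπ p).le) (hD p).le
    exact div_le_div₀ (Real.rpow_nonneg (hα p j) _)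
      (Real.rpow_le_rpow (hα p i) (hle p) hs0.le) hjpos hpow
  obtain ⟨h, hh⟩ := hlt
  have hdem_lt : cesDemand n α ρ π h i < cesDemand n α ρ π h j := by
    unfold cesDemand
    refine div_lt_div_of_pos_right (mul_lt_mul_of_pos_right ?_ (hπ h)) (hD h)
    exact div_lt_div₀ (Real.rpow_lt_rpow (hα h i) hh hs0) hpow
      (Real.rpow_nonneg (hα h j) _) hjpos
  have hsum := Finset.sum_lt_sum (fun p _ => hdem_le p) ⟨h, Finset.mem_univ h, hdem_lt⟩
  rw [hclear i, hclear j] at hsum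
  exact lt_irrefl _ hsum
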